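/- Let n ≥ 2 and let K = ℂ(x_1,…,x_n) be the function field of ℙ^n. Let q = ⟨1, a_1, a_2, …, a_r⟩ be a quadratic form over K with a_i ∈ K^*, and suppose a_1 = f/g with f, g ∈ ℂ[x_1,…,x_n] satisfying one of the following: (1) f and g are linear; (2) f and g have degree at most two and the homogenization (with respect to x_0,…,x_n) of g z² − f, regarded over L = ℂ(z), is a quadratic form of rank ≥ 3 over L. Then the projective quadric hypersurface Q defined by q is unirational over ℂ; more precisely, some degree two field extension of the function field K(Q) is purely transcendental over ℂ. -/

import Mathlib

/-!
Write `K = ℂ(x₁,…,xₙ)`. Over `K(√a₁)` the quadric has a smooth rational point, because `-1` is a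
square, and projecting from it shows that the function field of the quadric is generated by `r - 1`
elements. With `z = √a₁`, the relation `g z² = f` makes `K(√a₁)` the function field of a hyperplane
or of a quadric of rank at least three over `ℂ(z)`. By Tsen's theorem the latter also has a smooth
rational point, so `K(√a₁)` is generated by `n - 1` elements over `ℂ(z)`. Altogether `K(Q)(√a₁)` is
generated by `n + r - 1` elements over `ℂ`, which is its transcendence degree, so it is purely
transcendental. When `a₁` is already a square in `K(Q)`, the field `K(Q)` itself is purely
transcendental, and one adjoins a square root of a variable instead.
-/

set_option synthInstance.maxHeartbeats 1000000
set_option maxHeartbeats 1000000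

noncomputable section
open MvPolynomial

/-- The rational function field `ℂ(x₁,…,xₙ) = ℂ(ℙⁿ)`. -/
abbrev RatFF (d : ℕ) : Type := FractionRing (MvPolynomial (Fin d) ℂ)

/-- The coordinate ring of the affine chart `{z₀ = 1}` of the projective quadric
`Q = {z₀² + a₁ z₁² + ⋯ + a_r z_r² = 0} ⊂ ℙ^r_K` over `K = ℂ(x₁,…,xₙ)` determined by the
quadratic form `q = ⟨1, a₁, …, a_r⟩`.  When `Q` is integral, the fraction field of this
ring is the function field `K(Q)`. -/
def quadricChartRing (n r : ℕ) (a : Fin r → RatFF n) : Type :=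
  @HasQuotient.Quotient _ _ (Ideal.instHasQuotient (R := MvPolynomial (Fin r) (RatFF n)))
    (Ideal.span {(1 : MvPolynomial (Fin r) (RatFF n)) + ∑ i, C (a i) * X i ^ 2})

instance (n r : ℕ) (a : Fin r → RatFF n) : CommRing (quadricChartRing n r a) :=
  Ideal.Quotient.commRing _
instance (n r : ℕ) (a : Fin r → RatFF n) : Algebra ℂ (quadricChartRing n r a) :=
  Ideal.Quotient.algebra ℂ

/-- The symmetric `(n+1) × (n+1)` matrix (over `ℂ`) of the homogenization (with respect to
the extra variable `x₀`) of a polynomial `f ∈ ℂ[x₁,…,xₙ]` of degree at most two, so that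
the homogenization of `f` is the quadratic form `v ↦ vᵀ M v` in `v = (x₀, x₁, …, xₙ)`. -/
def homogMat {n : ℕ} (f : MvPolynomial (Fin n) ℂ) : Matrix (Fin (n+1)) (Fin (n+1)) ℂ :=
  Matrix.of fun i j =>
    if hi : i = 0 then
      if hj : j = 0 then coeff 0 f
      else (1/2) * coeff (Finsupp.single (j.pred hj) 1) f
    else if hj : j = 0 then (1/2) * coeff (Finsupp.single (i.pred hi) 1) f
    else if i = j then coeff (Finsupp.single (i.pred hi) 2) f
    else (1/2) * coeff (Finsupp.single (i.pred hi) 1 + Finsupp.single (j.pred hj) 1) f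

open scoped Polynomial

universe u

/-! ### Conics over `k(z)` -/

/-- The conic `x² = a y² + b z²` has a point with coordinates in `R`, in homogeneous
coordinates. -/
def ConicHasPoint {R : Type*} [CommRing R] (a b : R) : Prop :=
  ∃ x y z : R, (x ≠ 0 ∨ y ≠ 0 ∨ z ≠ 0) ∧ x ^ 2 = a * y ^ 2 + b * z ^ 2

namespace ConicHasPoint

lemma symm {R : Type*} [CommRing R] {a b : R} : ConicHasPoint a b → ConicHasPoint b a := by
  rintro ⟨x, y, z, h, e⟩
  exact ⟨x, z, y, by tauto, by rw [e, add_comm]⟩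

lemma of_isSquare {R : Type*} [CommRing R] [Nontrivial R] (a : R) {b : R} (hb : IsSquare b) :
    ConicHasPoint a b := by
  obtain ⟨s, rfl⟩ := hb
  exact ⟨s, 0, 1, by simp, by ring⟩

variable {R : Type*} [CommRing R] [IsDomain R] {a b c d : R}

lemma mul_sq (h : ConicHasPoint a b) (hd : d ≠ 0) : ConicHasPoint a (d * d * b) := by
  obtain ⟨x, y, z, hne, e⟩ := h
  refine ⟨d * x, d * y, z, ?_, by linear_combination d ^ 2 * e⟩
  simpa only [mul_ne_zero_iff_left hd, ne_eq, mul_eq_zero, hd, false_or] using hne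

-- `x + y √a` is multiplied by `c + √a`, which has norm `c² - a`.
lemma of_norm_eq_mul (h : ConicHasPoint a d) (hc : c ^ 2 - a = b * d) : ConicHasPoint a b := by
  by_cases hca : c ^ 2 - a = 0
  · exact ⟨c, 1, 0, by simp, by linear_combination hca⟩
  obtain ⟨x, y, z, hne, e⟩ := h
  refine ⟨x * c + a * y, x + c * y, d * z, ?_, ?_⟩
  · by_contra! ⟨hx', hy', hz'⟩
    have hd : d ≠ 0 := right_ne_zero_of_mul (hc ▸ hca)
    have hy : (c ^ 2 - a) * y = 0 := by linear_combination c * hy' - hx'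
    have hx : (c ^ 2 - a) * x = 0 := by linear_combination c * hx' - a * hy'
    simp only [mul_eq_zero, hca, hd, false_or] at hx hy hz'
    tauto
  · linear_combination (c ^ 2 - a) * e + d * z ^ 2 * hc

end ConicHasPoint

section Tsen

variable {k : Type*} [Field k] [IsAlgClosed k]

open Polynomial in
-- Interpolate square roots of the values of `a` at the roots of `b`.
lemma exists_sq_sub_eq_mul_of_squarefree {b : k[X]} (hb : Squarefree b) (a : k[X]) :
    ∃ c d : k[X], c.degree < b.degree ∧ c ^ 2 - a = b * d := by
  classical
  have hnodup : b.roots.Nodup := nodup_roots (PerfectField.separable_iff_squarefree.mpr hb)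
  choose s hs using fun t : k ↦ IsAlgClosed.exists_pow_nat_eq (a.eval t) two_pos
  let c := Lagrange.interpolate b.roots.toFinset id s
  have hdeg : c.degree < b.degree := by
    rw [(IsAlgClosed.splits b).degree_eq_card_roots hb.ne_zero,
      ← Multiset.toFinset_card_of_nodup hnodup]
    exact Lagrange.degree_interpolate_lt s Function.injective_id.injOn
  suffices b ∣ c ^ 2 - a from this.elim fun d hd ↦ ⟨c, d, hdeg, hd⟩
  by_cases h0 : c ^ 2 - a = 0
  · rw [h0]
    exact dvd_zero b
  refine (IsAlgClosed.splits b).dvd_of_roots_le_roots hb.ne_zero ?_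
  refine (Multiset.le_iff_subset hnodup).mpr fun t ht ↦ ?_
  have hct : c.eval t = s t :=
    Lagrange.eval_interpolate_at_node s Function.injective_id.injOn (Multiset.mem_toFinset.mpr ht)
  rw [mem_roots h0, IsRoot, Polynomial.eval_sub, Polynomial.eval_pow, hct, hs, sub_self]

open Polynomial in
lemma exists_conicHasPoint_descent {a b : k[X]} (hb : 0 < b.natDegree)
    (hab : a.natDegree ≤ b.natDegree) :
    ∃ d : k[X], d.natDegree < b.natDegree ∧ (ConicHasPoint a d → ConicHasPoint a b) := by
  have hb0 : b ≠ 0 := ne_zero_of_natDegree_gt hb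
  by_cases hsq : Squarefree b
  · obtain ⟨c, d, hc, hd⟩ := exists_sq_sub_eq_mul_of_squarefree hsq a
    refine ⟨d, ?_, fun h ↦ h.of_norm_eq_mul hd⟩
    rcases eq_or_ne d 0 with rfl | hd0
    · simpa only [natDegree_zero] using hb
    have hmul : (c ^ 2 - a).natDegree = b.natDegree + d.natDegree := by
      rw [hd, natDegree_mul hb0 hd0]
    have hsub : (c ^ 2 - a).natDegree ≤ max (2 * c.natDegree) a.natDegree :=
      natDegree_pow c 2 ▸ natDegree_sub_le (c ^ 2) a
    have hlt : c.natDegree < b.natDegree := by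
      rcases eq_or_ne c 0 with rfl | hc0
      · simpa only [natDegree_zero] using hb
      · exact natDegree_lt_natDegree hc0 hc
    omega
  · obtain ⟨p, hp, d, rfl⟩ : ∃ p, Irreducible p ∧ p * p ∣ b := by
      simpa only [squarefree_iff_no_irreducibles hb0, not_forall, not_not, exists_prop] using hsq
    refine ⟨d, ?_, fun h ↦ h.mul_sq hp.ne_zero⟩
    rw [natDegree_mul (left_ne_zero_of_mul hb0) (right_ne_zero_of_mul hb0),
      natDegree_mul hp.ne_zero hp.ne_zero]
    have := hp.natDegree_pos
    omega

theorem conicHasPoint_polynomial (a b : k[X]) : ConicHasPoint a b := by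
  induction h : a.natDegree + b.natDegree using Nat.strong_induction_on generalizing a b with
  | _ N ih =>
  subst h
  wlog hab : a.natDegree ≤ b.natDegree generalizing a b
  · exact (this b a (by rwa [add_comm]) (le_of_not_ge hab)).symm
  rcases Nat.eq_zero_or_pos b.natDegree with hb | hb
  · obtain ⟨β, rfl⟩ := Polynomial.natDegree_eq_zero.mp hb
    obtain ⟨s, rfl⟩ := IsAlgClosed.exists_pow_nat_eq β two_pos
    exact .of_isSquare a ⟨Polynomial.C s, by rw [sq, map_mul]⟩
  · obtain ⟨d, hd, hconic⟩ := exists_conicHasPoint_descent hb hab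
    exact hconic (ih _ (by omega) a d rfl)

end Tsen

lemma ConicHasPoint.of_isFractionRing (R : Type*) {L : Type*} [CommRing R] [IsDomain R] [Field L]
    [Algebra R L] [IsFractionRing R L] (h : ∀ a b : R, ConicHasPoint a b) (a b : L) :
    ConicHasPoint a b := by
  have integral_mod_squares (u : L) : ∃ (p : R) (s : L), s ≠ 0 ∧ s ^ 2 * u = algebraMap R L p := by
    obtain ⟨p, q, hq, rfl⟩ := IsFractionRing.div_surjective (A := R) u
    have hq0 : algebraMap R L q ≠ 0 := IsFractionRing.to_map_ne_zero_of_mem_nonZeroDivisors hq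
    exact ⟨q * p, algebraMap R L q, hq0, by rw [map_mul]; field_simp⟩
  obtain ⟨p, s, hs, hp⟩ := integral_mod_squares a
  obtain ⟨q, t, ht, hq⟩ := integral_mod_squares b
  obtain ⟨x, y, z, hne, e⟩ := h p q
  refine ⟨algebraMap R L x, s * algebraMap R L y, t * algebraMap R L z, ?_, ?_⟩
  · simpa only [ne_eq, mul_eq_zero, hs, ht, false_or, FaithfulSMul.algebraMap_eq_zero_iff] using hne
  · have := congrArg (algebraMap R L) e
    simp only [map_add, map_mul, map_pow, ← hp, ← hq] at this
    linear_combination this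

/-- Tsen's theorem for conics over `k(z)`. -/
theorem conicHasPoint_ratFunc {k : Type*} [Field k] [IsAlgClosed k] (a b : RatFunc k) :
    ConicHasPoint a b :=
  .of_isFractionRing k[X] conicHasPoint_polynomial a b

/-! ### Smooth points of quadrics -/

section SmoothPoint

open Matrix

variable {L ι : Type*} [Field L] [Fintype ι]

/-- A smooth `L`-rational point, in homogeneous coordinates, of the quadric `vᵀ M v = 0` attached
to a symmetric matrix `M`, when `2` is invertible. -/
def IsSmoothPoint (M : Matrix ι ι L) (v : ι → L) : Prop :=
  v ⬝ᵥ M *ᵥ v = 0 ∧ M *ᵥ v ≠ 0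

lemma IsSmoothPoint.of_congruent {M P : Matrix ι ι L} {v : ι → L}
    (h : IsSmoothPoint (Pᵀ * M * P) v) : IsSmoothPoint M (P *ᵥ v) := by
  obtain ⟨hv, hne⟩ := h
  simp only [← mulVec_mulVec] at hv hne
  refine ⟨?_, fun h0 ↦ hne (by rw [h0, mulVec_zero])⟩
  rwa [dotProduct_mulVec, vecMul_transpose] at hv

lemma exists_isSmoothPoint_diagonal [DecidableEq ι] (hconic : ∀ a b : L, ConicHasPoint a b)
    {d : ι → L} (hd : 3 ≤ (diagonal d).rank) : ∃ v, IsSmoothPoint (diagonal d) v := by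
  classical
  rw [rank_diagonal, Fintype.card_subtype] at hd
  obtain ⟨i, j, l, hi, hj, hl, hij, hil, hjl⟩ := Finset.two_lt_card_iff.mp hd
  simp only [Finset.mem_filter, Finset.mem_univ, true_and] at hi hj hl
  obtain ⟨x, y, z, hne, e⟩ := hconic (-(d j / d i)) (-(d l / d i))
  field_simp at e
  refine ⟨Pi.single i x + Pi.single j y + Pi.single l z, ?_, fun h0 ↦ ?_⟩
  · have hsum : (Pi.single i x + Pi.single j y + Pi.single l z) ⬝ᵥ
        diagonal d *ᵥ (Pi.single i x + Pi.single j y + Pi.single l z) =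
        d i * x ^ 2 + d j * y ^ 2 + d l * z ^ 2 := by
      simp only [mulVec_add, mulVec_single, col_diagonal, op_smul_eq_smul, dotProduct_add,
        dotProduct_smul, dotProduct_single, Pi.add_apply, Pi.single_eq_same, ne_eq, hij, hil, hjl,
        hij.symm, hil.symm, hjl.symm, not_false_eq_true, Pi.single_eq_of_ne, add_zero, zero_add,
        smul_eq_mul]
      ring
    linear_combination hsum + e
  · have hzero (t : ι) (ht : d t ≠ 0) := (mul_eq_zero.mp
      ((mulVec_diagonal d _ t).symm.trans (congrFun h0 t))).resolve_left ht
    have hx : x = 0 := by simpa [hij, hil] using hzero i hi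
    have hy : y = 0 := by simpa [hij.symm, hjl] using hzero j hj
    have hz : z = 0 := by simpa [hil.symm, hjl.symm] using hzero l hl
    tauto

variable [NeZero (2 : L)]

lemma exists_congruent_diagonal [DecidableEq ι] {M : Matrix ι ι L} (hM : M.IsSymm) :
    ∃ (P : Matrix ι ι L) (d : ι → L), IsUnit P.det ∧ Pᵀ * M * P = diagonal d := by
  have : Invertible (2 : L) := invertibleOfNonzero two_ne_zero
  obtain ⟨b, hb⟩ := LinearMap.BilinForm.exists_orthogonal_basis
    (B := toBilin (Pi.basisFun L ι) M)
    ⟨((isSymm_toBilin_iff_isSymm (Pi.basisFun L ι)).mpr hM).eq⟩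
  let b' := b.reindex (Fintype.equivOfCardEq (by simp) : Fin (Module.finrank L (ι → L)) ≃ ι)
  let := (Pi.basisFun L ι).invertibleToMatrix b'
  refine ⟨(Pi.basisFun L ι).toMatrix b', fun i ↦ toBilin (Pi.basisFun L ι) M (b' i) (b' i),
    isUnit_det_of_invertible _, ?_⟩
  have hcongr := LinearMap.BilinForm.toMatrix_mul_basis_toMatrix (Pi.basisFun L ι) b'
    (toBilin (Pi.basisFun L ι) M)
  rw [LinearMap.BilinForm.toMatrix_toBilin] at hcongr
  rw [hcongr]
  ext i j
  rw [LinearMap.BilinForm.toMatrix_apply, diagonal_apply]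
  split_ifs with hij
  · rw [hij]
  · simpa only [b', Module.Basis.reindex_apply] using hb ((Equiv.injective _).ne hij)

theorem exists_isSmoothPoint_of_three_le_rank (hconic : ∀ a b : L, ConicHasPoint a b)
    {M : Matrix ι ι L} (hM : M.IsSymm) (hrank : 3 ≤ M.rank) : ∃ v, IsSmoothPoint M v := by
  classical
  obtain ⟨P, d, hP, hd⟩ := exists_congruent_diagonal hM
  have hrank_diagonal : (diagonal d).rank = M.rank := by
    rw [← hd, rank_mul_eq_left_of_isUnit_det _ _ hP,
      rank_mul_eq_right_of_isUnit_det _ _ (by rwa [det_transpose])]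
  obtain ⟨v, hv⟩ := exists_isSmoothPoint_diagonal hconic (hrank_diagonal ▸ hrank)
  rw [← hd] at hv
  exact ⟨P *ᵥ v, hv.of_congruent⟩

end SmoothPoint

/-! ### Generators of field extensions -/

section Generators

open IntermediateField

lemma adjoin_image_union_eq_top {k L N : Type*} [Field k] [Field L] [Field N] [Algebra k L]
    [Algebra L N] [Algebra k N] [IsScalarTower k L N] {s : Set L} {t : Set N}
    (hs : adjoin k s = ⊤) (ht : adjoin L t = ⊤) : adjoin k (algebraMap L N '' s ∪ t) = ⊤ := by
  have hL (u : L) : algebraMap L N u ∈ adjoin k (algebraMap L N '' s ∪ t) := by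
    have hu : algebraMap L N u ∈ (adjoin k s).map (IsScalarTower.toAlgHom k L N) :=
      ⟨u, by rw [hs]; exact mem_top, rfl⟩
    rw [adjoin_map] at hu
    exact adjoin.mono k _ _ Set.subset_union_left hu
  refine eq_top_iff.mpr fun u _ ↦ ?_
  have hu : u ∈ adjoin L t := ht ▸ mem_top
  exact adjoin_le_iff (T := Subfield.toIntermediateField (adjoin k _).toSubfield hL) |>.mpr
    (Set.subset_union_right.trans (subset_adjoin k _)) hu

lemma adjoin_algebraMap_image_eq_top {k A : Type*} (F : Type*) [Field k] [CommRing A] [Field F]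
    [Algebra k A] [Algebra A F] [Algebra k F] [IsScalarTower k A F] [IsFractionRing A F]
    {s : Set A} (hs : Algebra.adjoin k s = ⊤) : adjoin k (algebraMap A F '' s) = ⊤ := by
  have hA (p : A) : algebraMap A F p ∈ adjoin k (algebraMap A F '' s) := by
    have hp : algebraMap A F p ∈ (Algebra.adjoin k s).map (IsScalarTower.toAlgHom k A F) :=
      ⟨p, by rw [hs]; trivial, rfl⟩
    rw [AlgHom.map_adjoin] at hp
    exact algebra_adjoin_le_adjoin k _ hp
  refine eq_top_iff.mpr fun u _ ↦ ?_
  obtain ⟨p, q, -, rfl⟩ := IsFractionRing.div_surjective (A := A) u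
  exact div_mem (hA p) (hA q)

/-- The field extension `N / k` is generated by at most `d` elements. -/
def GeneratedByAtMost (k N : Type*) [Field k] [Field N] [Algebra k N] (d : ℕ) : Prop :=
  ∃ s : Set N, s.encard ≤ d ∧ adjoin k s = ⊤

namespace GeneratedByAtMost

lemma of_adjoin_range {k N ι : Type*} [Field k] [Field N] [Algebra k N] [Fintype ι] {x : ι → N}
    (hx : adjoin k (Set.range x) = ⊤) : GeneratedByAtMost k N (Fintype.card ι) := by
  refine ⟨Set.range x, ?_, hx⟩
  rw [← Set.image_univ]
  exact (Set.encard_image_le x _).trans (by simp)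

lemma trans {k L N : Type*} [Field k] [Field L] [Field N] [Algebra k L] [Algebra L N]
    [Algebra k N] [IsScalarTower k L N] {d e : ℕ} (hL : GeneratedByAtMost k L d)
    (hN : GeneratedByAtMost L N e) : GeneratedByAtMost k N (d + e) := by
  obtain ⟨s, hs, hs_top⟩ := hL
  obtain ⟨t, ht, ht_top⟩ := hN
  refine ⟨algebraMap L N '' s ∪ t, ?_, adjoin_image_union_eq_top hs_top ht_top⟩
  calc (algebraMap L N '' s ∪ t).encard
      ≤ (algebraMap L N '' s).encard + t.encard := Set.encard_union_le _ _
    _ ≤ d + e := add_le_add ((Set.encard_image_le _ s).trans hs) ht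
    _ = ((d + e : ℕ) : ℕ∞) := (Nat.cast_add d e).symm

end GeneratedByAtMost

end Generators

/-! ### Rational function fields -/

section RationalFunctionField

open IntermediateField

/-- The rational function field `k(x₁,…,x_d)`. -/
abbrev RationalFunctionField (k : Type*) [Field k] (d : ℕ) : Type _ :=
  FractionRing (MvPolynomial (Fin d) k)

variable {k : Type*} [Field k]

lemma adjoin_X_eq_top (d : ℕ) : adjoin k (Set.range fun i ↦
    algebraMap (MvPolynomial (Fin d) k) (RationalFunctionField k d) (X i)) = ⊤ := by
  rw [Set.range_comp']
  exact adjoin_algebraMap_image_eq_top _ MvPolynomial.adjoin_range_X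

lemma isAlgebraic_adjoin_of_adjoin_eq_top {N : Type*} [Field N] [Algebra k N] {s : Set N}
    (hs : adjoin k s = ⊤) : Algebra.IsAlgebraic (Algebra.adjoin k s) N := by
  refine ⟨fun u ↦ ?_⟩
  have hu : u ∈ adjoin k s := hs ▸ mem_top
  obtain ⟨p, hp, q, hq, rfl⟩ := mem_adjoin_iff_div.mp hu
  rw [div_eq_mul_inv]
  exact (isAlgebraic_algebraMap (⟨p, hp⟩ : Algebra.adjoin k s)).mul
    (isAlgebraic_algebraMap (⟨q, hq⟩ : Algebra.adjoin k s)).inv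

lemma GeneratedByAtMost.exists_algebraicIndependent {N : Type*} [Field N] [Algebra k N] {d : ℕ}
    (h : GeneratedByAtMost k N d) (hd : (d : Cardinal) ≤ Algebra.trdeg k N) :
    ∃ y : Fin d → N, AlgebraicIndependent k y ∧ adjoin k (Set.range y) = ⊤ := by
  obtain ⟨s, hs, hs_top⟩ := h
  have hfin : s.Finite := Set.finite_of_encard_le_coe hs
  have := hfin.to_subtype
  have hcard : Nat.card s ≤ d := by
    rwa [Nat.card_coe_set_eq, ← Nat.cast_le (α := ℕ∞), hfin.cast_ncard_eq]
  have := isAlgebraic_adjoin_of_adjoin_eq_top hs_top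
  rw [← Subtype.range_coe (s := s)] at this
  have hbasis : IsTranscendenceBasis k ((↑) : s → N) :=
    Algebra.IsAlgebraic.isTranscendenceBasis_of_le_trdeg_of_finite k _
      (Nat.cast_card (α := s) ▸ (Nat.cast_le.mpr hcard).trans hd)
  have hcard' : Nat.card s = d :=
    hcard.antisymm (by rwa [← hbasis.cardinalMk_eq_trdeg, ← Nat.cast_card, Nat.cast_le] at hd)
  let e : Fin d ≃ s := (Finite.equivFinOfCardEq hcard').symm
  refine ⟨fun i ↦ e i, hbasis.1.comp e e.injective, ?_⟩
  rw [Set.range_comp', e.surjective.range_eq, Set.image_univ, Subtype.range_coe, hs_top]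

lemma GeneratedByAtMost.nonempty_algEquiv {N : Type*} [Field N] [Algebra k N] {d : ℕ}
    (h : GeneratedByAtMost k N d) (hd : (d : Cardinal) ≤ Algebra.trdeg k N) :
    Nonempty (N ≃ₐ[k] RationalFunctionField k d) := by
  obtain ⟨y, hy, hy_top⟩ := h.exists_algebraicIndependent hd
  exact ⟨((hy.aevalEquivField.trans (equivOfEq hy_top)).trans topEquiv).symm⟩

/-! ### Quadratic extensions -/

lemma not_isSquare_algebraMap_X {d : ℕ} (i : Fin d) :
    ¬ IsSquare (algebraMap (MvPolynomial (Fin d) k) (RationalFunctionField k d) (X i)) := by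
  rintro ⟨s, hs⟩
  rw [← sq] at hs
  obtain ⟨t, rfl⟩ := IsIntegrallyClosed.exists_algebraMap_eq_of_isIntegral_pow
    (R := MvPolynomial (Fin d) k) two_pos (hs ▸ isIntegral_algebraMap)
  rw [← map_pow, IsFractionRing.coe_inj] at hs
  exact (MvPolynomial.X_prime (R := k) (i := i)).irreducible.not_isSquare ⟨t, by rw [hs, sq]⟩

lemma irreducible_X_sq_sub_C {F : Type*} [Field F] {α : F} (hα : ¬ IsSquare α) :
    Irreducible (Polynomial.X ^ 2 - Polynomial.C α) :=
  (X_pow_sub_C_irreducible_iff_of_prime Nat.prime_two).mpr fun b hb ↦ hα ⟨b, by rw [← hb, sq]⟩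

variable {F : Type u} [Field F] [Algebra k F] {d : ℕ}

-- The quadratic extension is an arbitrary field in `h`, so that instances on `AdjoinRoot` are
-- not unfolded when the hypothesis is established.
lemma nonempty_adjoinRoot_algEquiv {α : F} (hα : ¬ IsSquare α)
    (hd : (d : Cardinal) ≤ Algebra.trdeg k F)
    (h : ∀ (N : Type u) [Field N] [Algebra k N] [Algebra F N] [IsScalarTower k F N] (ζ : N),
      ζ ^ 2 = algebraMap F N α → adjoin F {ζ} = ⊤ → GeneratedByAtMost k N d) :
    Nonempty (AdjoinRoot (Polynomial.X ^ 2 - Polynomial.C α) ≃ₐ[k]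
      RationalFunctionField k d) := by
  have : Fact (Irreducible (Polynomial.X ^ 2 - Polynomial.C α)) := ⟨irreducible_X_sq_sub_C hα⟩
  refine (h _ _ (root_X_pow_sub_C_pow 2 α) (adjoin_root_eq_top _)).nonempty_algEquiv (hd.trans ?_)
  exact trdeg_le_of_injective (IsScalarTower.toAlgHom k F _) (RingHom.injective _)

lemma GeneratedByAtMost.of_sqrt {N : Type*} [Field N] [Algebra k N] [Algebra F N]
    [IsScalarTower k F N] {y : Fin d → F} (hy : adjoin k (Set.range y) = ⊤) {i : Fin d} {ζ : N}
    (hζ : ζ ^ 2 = algebraMap F N (y i)) (hζ_top : adjoin F {ζ} = ⊤) :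
    GeneratedByAtMost k N d := by
  let w := Function.update (fun j ↦ algebraMap F N (y j)) i ζ
  have hwi : ζ ∈ adjoin k (Set.range w) :=
    subset_adjoin k _ ⟨i, Function.update_self ..⟩
  suffices adjoin k (Set.range w) = ⊤ by
    simpa only [Fintype.card_fin] using of_adjoin_range this
  rw [eq_top_iff, ← adjoin_image_union_eq_top hy hζ_top, adjoin_le_iff, Set.union_subset_iff,
    Set.singleton_subset_iff, ← Set.range_comp]
  refine ⟨Set.range_subset_iff.mpr fun j ↦ ?_, hwi⟩
  rcases eq_or_ne j i with rfl | hj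
  · rw [Function.comp_apply, ← hζ]
    exact pow_mem hwi 2
  · exact subset_adjoin k _ ⟨j, Function.update_of_ne hj ..⟩

-- Adjoin a square root of a variable.
lemma GeneratedByAtMost.exists_adjoinRoot_algEquiv (h : GeneratedByAtMost k F d)
    (hd : (d : Cardinal) ≤ Algebra.trdeg k F) (hd0 : 0 < d) :
    ∃ α : F, Nonempty (AdjoinRoot (Polynomial.X ^ 2 - Polynomial.C α) ≃ₐ[k]
      RationalFunctionField k d) := by
  obtain ⟨e⟩ := h.nonempty_algEquiv hd
  let y i := e.symm (algebraMap (MvPolynomial (Fin d) k) (RationalFunctionField k d) (X i))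
  have hy : adjoin k (Set.range y) = ⊤ := by
    rw [Set.range_comp', ← AlgEquiv.coe_toAlgHom, ← adjoin_map, adjoin_X_eq_top,
      ← AlgHom.fieldRange_eq_map, AlgHom.fieldRange_eq_top]
    exact e.symm.surjective
  refine ⟨y ⟨0, hd0⟩, nonempty_adjoinRoot_algEquiv ?_ hd fun N _ _ _ _ ζ hζ hζ_top ↦
    .of_sqrt hy hζ hζ_top⟩
  rintro ⟨s, hs⟩
  refine not_isSquare_algebraMap_X ⟨0, hd0⟩ ⟨e s, ?_⟩
  rw [← map_mul, ← hs, e.apply_symm_apply]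

end RationalFunctionField

/-! ### Points on hyperplanes and quadrics -/

section PointField

open IntermediateField Matrix

variable {L N ι : Type*} [Field L] [Field N] [Algebra L N]

/-- The residue field of the point of projective space over `L` with homogeneous coordinates
`w i ∈ N`: the subfield of `N` generated over `L` by the ratios of the coordinates. -/
def pointField (L : Type*) {N ι : Type*} [Field L] [Field N] [Algebra L N] (w : ι → N) :
    IntermediateField L N :=
  adjoin L (Set.range fun p : ι × ι ↦ w p.1 / w p.2)

lemma div_mem_pointField (w : ι → N) (i j : ι) : w i / w j ∈ pointField L w :=
  subset_adjoin L _ ⟨(i, j), rfl⟩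

lemma pointField_le {w : ι → N} {u : N} (hu : u ≠ 0) {K : IntermediateField L N}
    (h : ∀ i, w i / u ∈ K) : pointField L w ≤ K := by
  refine adjoin_le_iff.mpr (Set.range_subset_iff.mpr fun p ↦ ?_)
  rw [← div_div_div_cancel_right₀ hu]
  exact div_mem (h p.1) (h p.2)

variable [Fintype ι]

lemma exists_ne_ne_zero_of_sum_eq_zero {w : ι → N} {c : ι → L} (hc : c ≠ 0)
    (hcw : ∑ i, algebraMap L N (c i) * w i = 0) {i₀ : ι} (hi₀ : w i₀ ≠ 0) :
    ∃ j ≠ i₀, c j ≠ 0 := by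
  by_contra! h
  rw [Fintype.sum_eq_single i₀ fun j hj ↦ by rw [h j hj, map_zero, zero_mul], mul_eq_zero,
    FaithfulSMul.algebraMap_eq_zero_iff] at hcw
  refine hc (funext fun j ↦ ?_)
  rcases eq_or_ne j i₀ with rfl | hj
  · exact hcw.resolve_right hi₀
  · exact h j hj

lemma exists_pointField_le_of_linear {w : ι → N} (hw : w ≠ 0) {c : ι → L} (hc : c ≠ 0)
    (hcw : ∑ i, algebraMap L N (c i) * w i = 0) :
    ∃ s : Set N, s.encard + 2 ≤ Fintype.card ι ∧ pointField L w ≤ adjoin L s := by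
  classical
  obtain ⟨i₀, hi₀⟩ := Function.ne_iff.mp hw
  obtain ⟨j, hj, hcj⟩ := exists_ne_ne_zero_of_sum_eq_zero hc hcw hi₀
  let s := (fun i ↦ w i / w i₀) '' {i₀, j}ᶜ
  have hs (i : ι) (hi : i ≠ j) : w i / w i₀ ∈ adjoin L s := by
    rcases eq_or_ne i i₀ with rfl | hi'
    · rw [div_self hi₀]
      exact one_mem _
    · exact subset_adjoin L s ⟨i, by simp [hi, hi'], rfl⟩
  refine ⟨s, ?_, pointField_le hi₀ fun i ↦ ?_⟩
  · calc s.encard + 2 ≤ ({i₀, j}ᶜ : Set ι).encard + ({i₀, j} : Set ι).encard := by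
          rw [Set.encard_pair hj.symm]
          gcongr
          exact Set.encard_image_le _ _
      _ = Fintype.card ι := by
          rw [add_comm, Set.encard_add_encard_compl, Set.encard_univ, ENat.card_eq_coe_fintype_card]
  · rcases eq_or_ne i j with rfl | hij
    · have hci : algebraMap L N (c i) ≠ 0 := by simpa using hcj
      have hsolve : w i / w i₀ =
          -(∑ l ∈ Finset.univ.erase i, algebraMap L N (c l) * (w l / w i₀)) /
            algebraMap L N (c i) := by
        rw [← Finset.add_sum_erase _ _ (Finset.mem_univ i)] at hcw
        simp only [← mul_div_assoc, ← Finset.sum_div]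
        rw [eq_div_iff hci, ← neg_div, div_mul_eq_mul_div]
        congr 1
        linear_combination hcw
      rw [hsolve]
      refine div_mem (neg_mem (sum_mem fun l hl ↦ ?_)) (IntermediateField.algebraMap_mem _ _)
      exact mul_mem (IntermediateField.algebraMap_mem _ _) (hs l (Finset.ne_of_mem_erase hl))
    · exact hs i hij

lemma dotProduct_mulVec_map_mem (M : Matrix ι ι L) {K : IntermediateField L N} {x y : ι → N}
    (hx : ∀ i, x i ∈ K) (hy : ∀ i, y i ∈ K) : x ⬝ᵥ M.map (algebraMap L N) *ᵥ y ∈ K :=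
  sum_mem fun i _ ↦ mul_mem (hx i) <| sum_mem fun j _ ↦
    mul_mem (IntermediateField.algebraMap_mem K _) (hy j)

lemma dotProduct_mulVec_add_smul {R : Type*} [CommRing R] {M : Matrix ι ι R} (hM : M.IsSymm)
    {v : ι → R} (hv : v ⬝ᵥ M *ᵥ v = 0) (p : ι → R) (t : R) :
    (p + t • v) ⬝ᵥ M *ᵥ (p + t • v) = p ⬝ᵥ M *ᵥ p + 2 * t * (v ⬝ᵥ M *ᵥ p) := by
  have hpv : p ⬝ᵥ M *ᵥ v = v ⬝ᵥ M *ᵥ p := by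
    rw [dotProduct_mulVec, ← mulVec_transpose, hM.eq, dotProduct_comm]
  simp only [mulVec_add, mulVec_smul, dotProduct_add, add_dotProduct, dotProduct_smul,
    smul_dotProduct, smul_eq_mul, hv, hpv]
  ring

lemma dotProduct_mulVec_comp_algebraMap (M : Matrix ι ι L) (v : ι → L) :
    (algebraMap L N ∘ v) ⬝ᵥ M.map (algebraMap L N) *ᵥ (algebraMap L N ∘ v) =
      algebraMap L N (v ⬝ᵥ M *ᵥ v) := by
  rw [RingHom.map_dotProduct]
  exact congrArg _ (funext fun i ↦ (RingHom.map_mulVec _ M v i).symm)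

lemma algebraMap_comp_dotProduct_mulVec {M : Matrix ι ι L} (hM : M.IsSymm) (v : ι → L)
    (x : ι → N) : (algebraMap L N ∘ v) ⬝ᵥ M.map (algebraMap L N) *ᵥ x =
      ∑ i, algebraMap L N ((M *ᵥ v) i) * x i := by
  rw [dotProduct_mulVec, ← mulVec_transpose, (hM.map _).eq, dotProduct]
  exact Finset.sum_congr rfl fun i _ ↦ by rw [← RingHom.map_mulVec]

lemma two_ne_zero_of_algebra (k F : Type*) [Field k] [NeZero (2 : k)] [Semiring F] [Nontrivial F]
    [Algebra k F] : (2 : F) ≠ 0 := by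
  simpa only [map_ofNat, map_zero] using (algebraMap k F).injective.ne (NeZero.ne (2 : k))

lemma pointField_add_smul_le [NeZero (2 : L)] {M : Matrix ι ι L} (hM : M.IsSymm) {v : ι → L}
    (hv : v ⬝ᵥ M *ᵥ v = 0) {p : ι → N} {c : N}
    (hvp : (algebraMap L N ∘ v) ⬝ᵥ M.map (algebraMap L N) *ᵥ p ≠ 0)
    (hq : (p + c • algebraMap L N ∘ v) ⬝ᵥ
      M.map (algebraMap L N) *ᵥ (p + c • algebraMap L N ∘ v) = 0) :
    pointField L (p + c • algebraMap L N ∘ v) ≤ pointField L p := by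
  have hp : p ≠ 0 := fun h ↦ hvp (by rw [h, mulVec_zero, dotProduct_zero])
  obtain ⟨j, hj⟩ := Function.ne_iff.mp hp
  obtain ⟨t, ht⟩ : ∃ t, p = p j • t := ⟨fun i ↦ p i / p j, funext fun i ↦ by
    rw [Pi.smul_apply, smul_eq_mul, mul_div_cancel₀ _ hj]⟩
  have ht_mem (i : ι) : t i ∈ pointField L p := by
    rw [eq_div_of_mul_eq hj ((mul_comm _ _).trans (congrFun ht i).symm)]
    exact div_mem_pointField p i j
  have h2 : (2 : N) ≠ 0 := two_ne_zero_of_algebra L N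
  have hc : c / p j = -(t ⬝ᵥ M.map (algebraMap L N) *ᵥ t) /
      (2 * ((algebraMap L N ∘ v) ⬝ᵥ M.map (algebraMap L N) *ᵥ t)) := by
    rw [dotProduct_mulVec_add_smul (hM.map _)
      (by rw [dotProduct_mulVec_comp_algebraMap, hv, map_zero])] at hq
    rw [ht] at hq hvp
    simp only [mulVec_smul, dotProduct_smul, smul_dotProduct, smul_eq_mul] at hq hvp
    rw [div_eq_div_iff hj (mul_ne_zero h2 (right_ne_zero_of_mul hvp))]
    refine mul_left_cancel₀ hj ?_
    linear_combination hq
  have hc_mem : c / p j ∈ pointField L p := by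
    rw [hc]
    exact div_mem (neg_mem (dotProduct_mulVec_map_mem M ht_mem ht_mem)) (mul_mem (ofNat_mem _ 2)
      (dotProduct_mulVec_map_mem M (fun i ↦ IntermediateField.algebraMap_mem _ (v i)) ht_mem))
  refine pointField_le hj fun i ↦ ?_
  rw [Pi.add_apply, Pi.smul_apply, smul_eq_mul, add_div, mul_div_right_comm]
  exact add_mem (div_mem_pointField p i j)
    (mul_mem hc_mem (IntermediateField.algebraMap_mem _ (v i)))

-- Away from the tangent hyperplane at `v`, project from `v` to a hyperplane not containing `v`.
lemma exists_pointField_le_of_quadric [NeZero (2 : L)] {M : Matrix ι ι L} (hM : M.IsSymm)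
    {v : ι → L} (hv : IsSmoothPoint M v) {w : ι → N} (hw : w ≠ 0)
    (hMw : w ⬝ᵥ M.map (algebraMap L N) *ᵥ w = 0) :
    ∃ s : Set N, s.encard + 2 ≤ Fintype.card ι ∧ pointField L w ≤ adjoin L s := by
  classical
  by_cases htangent : ∑ i, algebraMap L N ((M *ᵥ v) i) * w i = 0
  · exact exists_pointField_le_of_linear hw hv.2 htangent
  obtain ⟨k, hk⟩ : ∃ k, v k ≠ 0 := by
    by_contra! h
    exact hv.2 (by rw [funext h]; exact mulVec_zero M)
  have hVk : algebraMap L N (v k) ≠ 0 := by simpa using hk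
  obtain ⟨c, hc⟩ : ∃ c, w k = c * algebraMap L N (v k) := ⟨_, (div_mul_cancel₀ _ hVk).symm⟩
  obtain ⟨p, rfl⟩ : ∃ p, w = p + c • algebraMap L N ∘ v := ⟨w - c • _, (sub_add_cancel _ _).symm⟩
  have hpk : p k = 0 := by
    simpa only [Pi.add_apply, Pi.smul_apply, smul_eq_mul, Function.comp_apply,
      add_eq_right] using hc
  have hvp : (algebraMap L N ∘ v) ⬝ᵥ M.map (algebraMap L N) *ᵥ p ≠ 0 := by
    rw [← algebraMap_comp_dotProduct_mulVec hM, mulVec_add, mulVec_smul, dotProduct_add,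
      dotProduct_smul, dotProduct_mulVec_comp_algebraMap, hv.1, map_zero, smul_zero,
      add_zero] at htangent
    exact htangent
  obtain ⟨s, hs, hps⟩ := exists_pointField_le_of_linear (L := L) (w := p)
    (fun h ↦ hvp (by rw [h, mulVec_zero, dotProduct_zero])) (c := Pi.single k 1)
    (Pi.single_ne_zero_iff.mpr one_ne_zero) (by
      rw [Fintype.sum_eq_single k fun i hi ↦ by rw [Pi.single_eq_of_ne hi, map_zero, zero_mul],
        hpk, mul_zero])
  exact ⟨s, hs, (pointField_add_smul_le hM hv.1 hvp hMw).trans hps⟩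

lemma exists_generatedByAtMost_of_pointField_le {n : ℕ} {x : Fin n → N}
    (hx : adjoin L (Set.range x) = ⊤) {s : Set N} (hs : s.encard + 2 ≤ Fintype.card (Fin (n + 1)))
    (hle : pointField L (vecCons 1 x) ≤ adjoin L s) :
    ∃ d, d + 1 = n ∧ GeneratedByAtMost L N d := by
  have hs_top : adjoin L s = ⊤ := by
    refine eq_top_iff.mpr (hx ▸ adjoin_le_iff.mpr (Set.range_subset_iff.mpr fun i ↦ hle ?_))
    simpa only [cons_val_succ, cons_val_zero, div_one] using
      div_mem_pointField (L := L) (vecCons 1 x) i.succ 0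
  have hs' : s.encard + 1 ≤ n := by
    rw [Fintype.card_fin, Nat.cast_add, ← one_add_one_eq_two, ← add_assoc] at hs
    exact (ENat.add_le_add_iff_right ENat.one_ne_top).mp hs
  obtain _ | n := n
  · simp at hs'
  · rw [Nat.cast_add, Nat.cast_one] at hs'
    exact ⟨n, rfl, s, (ENat.add_le_add_iff_right ENat.one_ne_top).mp hs', hs_top⟩

end PointField

/-! ### Polynomials of degree at most two as quadratic forms -/

section Homogenization

open Matrix
open scoped Pointwise

variable {n : ℕ}

lemma eq_of_tail_eq_tail {s t : Fin (n + 1) →₀ ℕ} (h : s.tail = t.tail)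
    (hdeg : s.degree = t.degree) : s = t := by
  have h' : s.degree = s 0 + s.tail.degree ∧ t.degree = t 0 + t.tail.degree := by
    simp only [Finsupp.degree_eq_sum, Fin.sum_univ_succ, Finsupp.tail_apply, and_self]
  rw [h] at h'
  rw [← s.cons_tail, ← t.cons_tail, h, show s 0 = t 0 by omega]

lemma exists_tail_eq_of_degree_le {m : Fin n →₀ ℕ} {d : ℕ} (hm : m.degree ≤ d) :
    ∃ s : Fin (n + 1) →₀ ℕ, s.degree = d ∧ s.tail = m := by
  refine ⟨Finsupp.cons (d - m.degree) m, ?_, Finsupp.tail_cons _ m⟩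
  rw [Finsupp.degree_eq_sum, Fin.sum_univ_succ, Finsupp.cons_zero]
  simp only [Finsupp.cons_succ]
  rw [← Finsupp.degree_eq_sum, Nat.sub_add_cancel hm]

lemma exists_eq_single_add_single_of_degree_eq_two {σ : Type*} {s : σ →₀ ℕ} (hs : s.degree = 2) :
    ∃ i j, s = Finsupp.single i 1 + Finsupp.single j 1 := by
  have hs' : s ∈ Finsupp.degree ⁻¹' ({1} + {1} : Set ℕ) := by
    rwa [Set.singleton_add_singleton]
  rw [Finsupp.degree_preimage_add] at hs'
  obtain ⟨_, hi, _, hj, rfl⟩ := hs'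
  obtain ⟨i, rfl⟩ := Finsupp.range_single_one.ge hi
  obtain ⟨j, rfl⟩ := Finsupp.range_single_one.ge hj
  exact ⟨i, j, rfl⟩

variable {k : Type*} [Field k]

/-- Every monomial of degree at most `d` is dehomogenized from one of degree `d`. -/
@[elab_as_elim]
lemma induction_on_of_totalDegree_le {P : MvPolynomial (Fin n) k → Prop} {d : ℕ}
    (add : ∀ p q, P p → P q → P (p + q))
    (monomial_tail : ∀ s : Fin (n + 1) →₀ ℕ, s.degree = d → ∀ c, P (monomial s.tail c))
    (f : MvPolynomial (Fin n) k) (hf : f.totalDegree ≤ d) : P f := by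
  have hP (m : Fin n →₀ ℕ) (hm : m.degree ≤ d) (c : k) : P (monomial m c) := by
    obtain ⟨s, hs, rfl⟩ := exists_tail_eq_of_degree_le hm
    exact monomial_tail s hs c
  rw [f.as_sum]
  refine Finset.sum_induction _ P add ?_ fun m hm ↦ hP m ((le_totalDegree hm).trans hf) _
  simpa only [map_zero] using hP 0 (by simp) 0

variable {N : Type*} [Field N] [Algebra k N]

lemma aeval_monomial_tail (x : Fin n → N) (s : Fin (n + 1) →₀ ℕ) (c : k) :
    aeval x (monomial s.tail c) = algebraMap k N c * ∏ i, vecCons 1 x i ^ s i := by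
  rw [aeval_monomial, Finsupp.prod_fintype _ _ fun i ↦ pow_zero _, Fin.prod_univ_succ,
    cons_val_zero, one_pow, one_mul]
  rfl

lemma prod_pow_single_one {ι R : Type*} [Fintype ι] [CommMonoid R] (w : ι → R) (i : ι) :
    ∏ j, w j ^ Finsupp.single i 1 j = w i := by
  rw [Fintype.prod_eq_single i fun j hj ↦ by rw [Finsupp.single_eq_of_ne hj, pow_zero],
    Finsupp.single_eq_same, pow_one]

/-- The coefficients of the linear form in `x₀, …, xₙ` that dehomogenizes to `f`, for `f` of degree
at most one. -/
def linearFormCoeff (f : MvPolynomial (Fin n) k) (i : Fin (n + 1)) : k :=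
  coeff (Finsupp.single i 1).tail f

lemma aeval_eq_sum_linearFormCoeff (x : Fin n → N) {f : MvPolynomial (Fin n) k}
    (hf : f.totalDegree ≤ 1) :
    aeval x f = ∑ i, algebraMap k N (linearFormCoeff f i) * vecCons 1 x i := by
  refine induction_on_of_totalDegree_le (fun p q hp hq ↦ ?_) (fun s hs c ↦ ?_) f hf
  · simp only [linearFormCoeff, coeff_add, map_add, add_mul, Finset.sum_add_distrib, hp, hq]
  · obtain ⟨i, rfl⟩ : ∃ i, Finsupp.single i 1 = s := by
      rwa [← Set.mem_range, Finsupp.range_single_one]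
    rw [aeval_monomial_tail, prod_pow_single_one, Fintype.sum_eq_single i fun j hj ↦ ?_]
    · rw [linearFormCoeff, coeff_monomial, if_pos rfl]
    · rw [linearFormCoeff, coeff_monomial, if_neg, map_zero, zero_mul]
      intro h
      have := eq_of_tail_eq_tail h (by simp only [Finsupp.degree_single])
      exact hj ((Finsupp.single_left_inj one_ne_zero).mp this).symm

/-- The Gram matrix of the quadratic form in `x₀, …, xₙ` that dehomogenizes to `f`, for `f` of
degree at most two; the coefficients of mixed monomials are shared by two entries. -/
def quadraticFormMatrix (f : MvPolynomial (Fin n) k) : Matrix (Fin (n + 1)) (Fin (n + 1)) k :=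
  of fun i j ↦ (if i = j then 1 else 1 / 2) *
    coeff (Finsupp.single i 1 + Finsupp.single j 1).tail f

lemma quadraticFormMatrix_isSymm (f : MvPolynomial (Fin n) k) :
    (quadraticFormMatrix f).IsSymm := by
  ext i j
  simp only [quadraticFormMatrix, transpose_apply, of_apply, add_comm (Finsupp.single i 1),
    eq_comm (a := i)]

lemma quadraticFormMatrix_add (f g : MvPolynomial (Fin n) k) :
    quadraticFormMatrix (f + g) = quadraticFormMatrix f + quadraticFormMatrix g := by
  ext i j
  simp only [quadraticFormMatrix, of_apply, coeff_add, mul_add, Matrix.add_apply]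

lemma quadraticFormMatrix_monomial [NeZero (2 : k)] (i j : Fin (n + 1)) (c : k) :
    quadraticFormMatrix (monomial (Finsupp.single i 1 + Finsupp.single j 1).tail c) =
      Matrix.single i j (c / 2) + Matrix.single j i (c / 2) := by
  have htail (a b : Fin (n + 1)) : (Finsupp.single i 1 + Finsupp.single j 1).tail =
      (Finsupp.single a 1 + Finsupp.single b 1).tail ↔ i = a ∧ j = b ∨ i = b ∧ j = a := by
    constructor
    · intro h
      have := eq_of_tail_eq_tail h (by simp only [map_add, Finsupp.degree_single])
      rw [Finsupp.single_add_single_eq_single_add_single one_ne_zero one_ne_zero] at this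
      simpa using this
    · rintro (⟨rfl, rfl⟩ | ⟨rfl, rfl⟩)
      · rfl
      · rw [add_comm]
  ext a b
  simp only [quadraticFormMatrix, of_apply, coeff_monomial, htail, Matrix.add_apply, single_apply]
  have h2 := NeZero.ne (2 : k)
  grind

lemma aeval_eq_dotProduct_quadraticFormMatrix [NeZero (2 : k)] (x : Fin n → N)
    {f : MvPolynomial (Fin n) k} (hf : f.totalDegree ≤ 2) :
    aeval x f = vecCons 1 x ⬝ᵥ (quadraticFormMatrix f).map (algebraMap k N) *ᵥ vecCons 1 x := by
  refine induction_on_of_totalDegree_le (fun p q hp hq ↦ ?_) (fun s hs c ↦ ?_) f hf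
  · rw [map_add, hp, hq, quadraticFormMatrix_add, Matrix.map_add _ (map_add _), add_mulVec,
      dotProduct_add]
  · obtain ⟨i, j, rfl⟩ := exists_eq_single_add_single_of_degree_eq_two hs
    rw [aeval_monomial_tail, quadraticFormMatrix_monomial, Matrix.map_add _ (map_add _), map_single,
      map_single]
    simp only [Finsupp.add_apply, pow_add, Finset.prod_mul_distrib, add_mulVec, single_mulVec_eq,
      dotProduct_add, dotProduct_smul, dotProduct_single,
      prod_pow_single_one, smul_eq_mul, mul_one]
    have hc : algebraMap k N c = algebraMap k N (c / 2) + algebraMap k N (c / 2) := by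
      rw [← map_add, ← two_mul, mul_div_cancel₀ _ (NeZero.ne 2)]
    rw [hc]
    ring

end Homogenization

/-! ### Adjoining a square root of a special fraction -/

section SpecialPair

open IntermediateField Matrix

variable {k : Type*} [Field k] {n : ℕ}

/-- The Gram matrix of the homogenization of `g z² - f`, a quadratic form over `k(z)`. -/
def pencilMatrix (f g : MvPolynomial (Fin n) k) :
    Matrix (Fin (n + 1)) (Fin (n + 1)) (RatFunc k) :=
  of fun i j ↦ RatFunc.X ^ 2 * algebraMap k (RatFunc k) (quadraticFormMatrix g i j) -
    algebraMap k (RatFunc k) (quadraticFormMatrix f i j)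

/-- The conditions (1) and (2) on the numerator `f` and the denominator `g` of the first
coefficient of the quadratic form. -/
def IsSpecialPair (f g : MvPolynomial (Fin n) k) : Prop :=
  (f.totalDegree ≤ 1 ∧ g.totalDegree ≤ 1) ∨
    (f.totalDegree ≤ 2 ∧ g.totalDegree ≤ 2 ∧ 3 ≤ (pencilMatrix f g).rank)

lemma pencilMatrix_isSymm (f g : MvPolynomial (Fin n) k) : (pencilMatrix f g).IsSymm := by
  ext i j
  simp only [pencilMatrix, transpose_apply, of_apply, (quadraticFormMatrix_isSymm _).apply i j]

lemma eq_zero_of_X_sq_mul_sub_eq_zero {a b : k} (h : (RatFunc.X : RatFunc k) ^ 2 *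
    algebraMap k (RatFunc k) a - algebraMap k (RatFunc k) b = 0) : a = 0 := by
  have h' : algebraMap (Polynomial k) (RatFunc k)
      (Polynomial.C a * Polynomial.X ^ 2 - Polynomial.C b) = 0 := by
    rw [mul_comm] at h
    simpa only [map_sub, map_mul, map_pow, RatFunc.algebraMap_X, RatFunc.algebraMap_C,
      RatFunc.algebraMap_eq_C] using h
  rw [FaithfulSMul.algebraMap_eq_zero_iff] at h'
  simpa [Polynomial.coeff_C] using congrArg (Polynomial.coeff · 2) h'

lemma generatedByAtMost_ratFunc : GeneratedByAtMost k (RatFunc k) 1 :=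
  ⟨_, by simp, adjoin_algebraMap_image_eq_top (RatFunc k) (Polynomial.adjoin_X (R := k))⟩

variable {N : Type*} [Field N] [Algebra k N]

section OverRatFunc

variable [Algebra (RatFunc k) N] [IsScalarTower k (RatFunc k) N] {x : Fin n → N}
  {f g : MvPolynomial (Fin n) k}

lemma sum_linear_pencil_eq_zero (hf : f.totalDegree ≤ 1) (hg : g.totalDegree ≤ 1)
    (h : algebraMap (RatFunc k) N RatFunc.X ^ 2 * aeval x g = aeval x f) :
    ∑ i, algebraMap (RatFunc k) N (RatFunc.X ^ 2 * algebraMap k (RatFunc k) (linearFormCoeff g i) -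
      algebraMap k (RatFunc k) (linearFormCoeff f i)) * vecCons 1 x i = 0 := by
  rw [← sub_eq_zero, aeval_eq_sum_linearFormCoeff x hf, aeval_eq_sum_linearFormCoeff x hg] at h
  simpa only [map_sub, map_mul, map_pow, ← IsScalarTower.algebraMap_apply, sub_mul,
    Finset.sum_sub_distrib, mul_assoc, ← Finset.mul_sum] using h

lemma dotProduct_pencilMatrix_eq_zero [NeZero (2 : k)] (hf : f.totalDegree ≤ 2)
    (hg : g.totalDegree ≤ 2)
    (h : algebraMap (RatFunc k) N RatFunc.X ^ 2 * aeval x g = aeval x f) :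
    vecCons 1 x ⬝ᵥ (pencilMatrix f g).map (algebraMap (RatFunc k) N) *ᵥ vecCons 1 x = 0 := by
  have hmap : (pencilMatrix f g).map (algebraMap (RatFunc k) N) =
      algebraMap (RatFunc k) N RatFunc.X ^ 2 • (quadraticFormMatrix g).map (algebraMap k N) -
        (quadraticFormMatrix f).map (algebraMap k N) := by
    ext i j
    simp only [pencilMatrix, map_apply, of_apply, map_sub, map_mul, map_pow,
      ← IsScalarTower.algebraMap_apply, Matrix.sub_apply, Matrix.smul_apply, smul_eq_mul]
  rw [hmap, sub_mulVec, smul_mulVec, dotProduct_sub, dotProduct_smul, smul_eq_mul,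
    ← aeval_eq_dotProduct_quadraticFormMatrix x hf, ← aeval_eq_dotProduct_quadraticFormMatrix x hg,
    h, sub_self]

lemma IsSpecialPair.exists_generatedByAtMost_ratFunc [IsAlgClosed k] [NeZero (2 : k)]
    (hfg : IsSpecialPair f g) (hx : adjoin (RatFunc k) (Set.range x) = ⊤) (hg : aeval x g ≠ 0)
    (h : algebraMap (RatFunc k) N RatFunc.X ^ 2 * aeval x g = aeval x f) :
    ∃ d, d + 1 = n ∧ GeneratedByAtMost (RatFunc k) N d := by
  have hw : vecCons 1 x ≠ 0 := fun h ↦ one_ne_zero (congrFun h 0)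
  rcases hfg with ⟨hf1, hg1⟩ | ⟨hf2, hg2, hrank⟩
  · obtain ⟨s, hs, hle⟩ : ∃ s : Set N, _ ∧ pointField (RatFunc k) (vecCons 1 x) ≤ _ := by
      refine exists_pointField_le_of_linear hw (fun hc ↦ hg ?_)
        (sum_linear_pencil_eq_zero hf1 hg1 h)
      rw [aeval_eq_sum_linearFormCoeff x hg1]
      refine Finset.sum_eq_zero fun i _ ↦ ?_
      rw [eq_zero_of_X_sq_mul_sub_eq_zero (congrFun hc i), map_zero, zero_mul]
    exact exists_generatedByAtMost_of_pointField_le hx hs hle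
  · have : NeZero (2 : RatFunc k) := ⟨two_ne_zero_of_algebra k (RatFunc k)⟩
    obtain ⟨v, hv⟩ := exists_isSmoothPoint_of_three_le_rank conicHasPoint_ratFunc
      (pencilMatrix_isSymm f g) hrank
    obtain ⟨s, hs, hle⟩ := exists_pointField_le_of_quadric (pencilMatrix_isSymm f g) hv hw
      (dotProduct_pencilMatrix_eq_zero hf2 hg2 h)
    exact exists_generatedByAtMost_of_pointField_le hx hs hle

end OverRatFunc

lemma exists_algHom_ratFunc {ζ : N} (hζ : Transcendental k ζ) :
    ∃ φ : RatFunc k →ₐ[k] N, φ RatFunc.X = ζ := by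
  refine ⟨RatFunc.liftAlgHom (Polynomial.aeval ζ) ?_, ?_⟩
  · exact nonZeroDivisors_le_comap_nonZeroDivisors_of_injective _
      (transcendental_iff_injective.mp hζ)
  · simp [RatFunc.liftAlgHom_apply]

lemma IsSpecialPair.generatedByAtMost [IsAlgClosed k] [NeZero (2 : k)]
    {f g : MvPolynomial (Fin n) k} (hfg : IsSpecialPair f g) {x : Fin n → N} {ζ : N}
    (hx : adjoin k (Set.range x ∪ {ζ}) = ⊤) (hg : aeval x g ≠ 0)
    (hζ : ζ ^ 2 * aeval x g = aeval x f) : GeneratedByAtMost k N n := by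
  by_cases hζ_alg : IsAlgebraic k ζ
  · obtain ⟨c, rfl⟩ : ζ ∈ (algebraMap k N).range :=
      minpoly.mem_range_of_degree_eq_one k ζ
        (IsAlgClosed.degree_eq_one_of_irreducible k (minpoly.irreducible hζ_alg.isIntegral))
    suffices adjoin k (Set.range x) = ⊤ by
      simpa only [Fintype.card_fin] using GeneratedByAtMost.of_adjoin_range this
    rw [eq_top_iff, ← hx, adjoin_le_iff, Set.union_subset_iff, Set.singleton_subset_iff]
    exact ⟨subset_adjoin k _, IntermediateField.algebraMap_mem _ c⟩
  · obtain ⟨φ, rfl⟩ := exists_algHom_ratFunc hζ_alg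
    let _ : Algebra (RatFunc k) N := φ.toRingHom.toAlgebra
    have : IsScalarTower k (RatFunc k) N := .of_algebraMap_eq fun c ↦ (φ.commutes c).symm
    have hx' : adjoin (RatFunc k) (Set.range x) = ⊤ := by
      rw [← restrictScalars_eq_top_iff (K := k), eq_top_iff, ← hx, adjoin_le_iff,
        Set.union_subset_iff, Set.singleton_subset_iff]
      exact ⟨subset_adjoin (RatFunc k) _, IntermediateField.algebraMap_mem _ RatFunc.X⟩
    obtain ⟨d, rfl, hd⟩ := hfg.exists_generatedByAtMost_ratFunc hx' hg hζ
    rw [add_comm]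
    exact generatedByAtMost_ratFunc.trans hd

end SpecialPair

/-! ### Function fields of quadrics -/

section Quadric

open IntermediateField Matrix

variable {r : ℕ}

/-- The dehomogenization at `z₀ = 1` of the quadratic form `⟨1, a₁, …, a_r⟩`. -/
abbrev quadricPolynomial {K : Type*} [CommRing K] (a : Fin r → K) : MvPolynomial (Fin r) K :=
  1 + ∑ i, C (a i) * X i ^ 2

/-- The coordinate ring of the affine quadric `1 + a₁ z₁² + ⋯ + a_r z_r² = 0`. -/
abbrev QuadricRing {K : Type*} [CommRing K] (a : Fin r → K) : Type _ :=
  MvPolynomial (Fin r) K ⧸ Ideal.span {quadricPolynomial a}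

lemma isSmoothPoint_diagonal {L : Type*} [Field L] {a : Fin r → L} {i₀ : Fin r} {c : L}
    (hc : 1 + a i₀ * c ^ 2 = 0) :
    IsSmoothPoint (diagonal (vecCons 1 a)) (vecCons 1 (Pi.single i₀ c)) := by
  refine ⟨?_, fun h ↦ ?_⟩
  · rw [← hc, dotProduct, Fin.sum_univ_succ, Fintype.sum_eq_single i₀ fun i hi ↦ by
      rw [cons_val_succ, Pi.single_eq_of_ne hi, zero_mul]]
    simp only [mulVec_diagonal, cons_val_zero, cons_val_succ, Pi.single_eq_same]
    ring
  · simpa only [mulVec_diagonal, cons_val_zero, one_mul, Pi.zero_apply, one_ne_zero]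
      using congrFun h 0

lemma aeval_quadricPolynomial {K N : Type*} [CommRing K] [CommRing N] [Algebra K N]
    (a : Fin r → K) (z : Fin r → N) : aeval z (quadricPolynomial a) =
      vecCons 1 z ⬝ᵥ (diagonal (vecCons 1 a)).map (algebraMap K N) *ᵥ vecCons 1 z := by
  rw [diagonal_map (map_zero _), dotProduct, Fin.sum_univ_succ]
  simp only [mulVec_diagonal, cons_val_zero, cons_val_succ, map_add, map_one, map_sum, map_mul,
    aeval_C, aeval_X, one_mul, sq, mul_left_comm]

lemma exists_generatedByAtMost_of_quadric {L N : Type*} [Field L] [NeZero (2 : L)] [Field N]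
    [Algebra L N] {a : Fin r → L} {i₀ : Fin r} {c : L} (hc : 1 + a i₀ * c ^ 2 = 0)
    {z : Fin r → N} (hz : aeval z (quadricPolynomial a) = 0)
    (hz_top : adjoin L (Set.range z) = ⊤) : ∃ d, d + 1 = r ∧ GeneratedByAtMost L N d := by
  rw [aeval_quadricPolynomial] at hz
  obtain ⟨s, hs, hle⟩ := exists_pointField_le_of_quadric (isSymm_diagonal _)
    (isSmoothPoint_diagonal hc) (fun h ↦ one_ne_zero (congrFun h 0)) hz
  exact exists_generatedByAtMost_of_pointField_le hz_top hs hle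

lemma degreeOf_quadricPolynomial_ne_zero {K : Type*} [CommRing K] {a : Fin r → K} {i₀ : Fin r}
    (ha : a i₀ ≠ 0) : degreeOf i₀ (quadricPolynomial a) ≠ 0 := by
  have hcoeff : coeff (Finsupp.single i₀ 2) (quadricPolynomial a) = a i₀ := by
    rw [coeff_add, coeff_one, if_neg (Finsupp.single_ne_zero.mpr two_ne_zero).symm, zero_add,
      coeff_sum, Fintype.sum_eq_single i₀ fun j hj ↦ by
        rw [coeff_C_mul, coeff_X_pow, if_neg fun h ↦ hj (Finsupp.single_left_injective
          two_ne_zero h), mul_zero], coeff_C_mul, coeff_X_pow, if_pos rfl, mul_one]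
  have := monomial_le_degreeOf i₀ (mem_support_iff.mpr (hcoeff ▸ ha))
  rw [Finsupp.single_eq_same] at this
  omega

lemma aeval_mk_X_eq_mk_rename {R σ τ : Type*} [CommRing R] (I : Ideal (MvPolynomial σ R))
    (φ : τ → σ) (p : MvPolynomial τ R) :
    aeval (fun i ↦ Ideal.Quotient.mk I (X (φ i))) p = Ideal.Quotient.mk I (rename φ p) := by
  have := comp_aeval_apply (fun i ↦ X (φ i)) (Ideal.Quotient.mkₐ R I) p
  rw [rename_eq_aeval]
  exact this.symm

-- A nonzero multiple of `q` has positive degree in the omitted variable.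
lemma algebraicIndependent_mk_X {R σ : Type*} [CommRing R] [IsDomain R] {q : MvPolynomial σ R}
    {i₀ : σ} (hq : degreeOf i₀ q ≠ 0) : AlgebraicIndependent R fun i : {i // i ≠ i₀} ↦
      Ideal.Quotient.mk (Ideal.span {q}) (X (i : σ)) := by
  rw [algebraicIndependent_iff]
  intro p hp
  rw [aeval_mk_X_eq_mk_rename, Ideal.Quotient.eq_zero_iff_mem, Ideal.mem_span_singleton] at hp
  obtain ⟨h, hh⟩ := hp
  have hdeg : degreeOf i₀ (rename ((↑) : {i // i ≠ i₀} → σ) p) = 0 := by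
    classical
    by_contra hne
    obtain ⟨j, -, hj⟩ := mem_vars_rename _ _ (mem_vars_iff_degreeOf_ne_zero.mpr hne)
    exact j.2 hj
  have hq0 : q ≠ 0 := fun h0 ↦ hq (by rw [h0, degreeOf_zero])
  have hh0 : h = 0 := by
    by_contra hne
    rw [hh, degreeOf_mul_eq hq0 hne] at hdeg
    omega
  exact rename_injective _ Subtype.val_injective (by rw [hh, hh0, mul_zero, map_zero])

variable {k : Type u} [Field k] {n : ℕ} {a : Fin r → RationalFunctionField k n} {i₀ : Fin r}

lemma le_trdeg_quadric {F : Type u} [Field F] [Algebra k F] [Algebra (RationalFunctionField k n) F]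
    [IsScalarTower k (RationalFunctionField k n) F]
    [Algebra (QuadricRing a) F] [FaithfulSMul (QuadricRing a) F]
    [IsScalarTower (RationalFunctionField k n) (QuadricRing a) F] (ha : a i₀ ≠ 0) :
    ((n + r - 1 : ℕ) : Cardinal) ≤ Algebra.trdeg k F := by
  have hX := (algebraicIndependent_X (Fin n) k).map' (f := IsScalarTower.toAlgHom k _
    (RationalFunctionField k n)) (IsFractionRing.injective _ _)
  have hz := (algebraicIndependent_mk_X (degreeOf_quadricPolynomial_ne_zero ha)).map'
    (f := IsScalarTower.toAlgHom (RationalFunctionField k n) (QuadricRing a) F)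
    (FaithfulSMul.algebraMap_injective _ _)
  have hcard := (hX.sumElim_comp hz).lift_cardinalMk_le_trdeg
  have : Fintype.card ({i : Fin r // i ≠ i₀} ⊕ Fin n) = n + r - 1 := by
    have := i₀.pos
    simp only [Fintype.card_sum, ne_eq, Fintype.card_subtype_compl, Fintype.card_subtype_eq,
      Fintype.card_fin]
    omega
  simpa [this] using hcard

lemma adjoin_gen_eq_top (K : Type*) {N : Type*} [Field K] [Field N] [Algebra K N] (ζ : N) :
    adjoin K {AdjoinSimple.gen K ζ} = ⊤ := by
  apply lift_injective
  rw [lift_adjoin_simple, AdjoinSimple.coe_gen, lift_top]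

variable {f g : MvPolynomial (Fin n) k}

lemma IsSpecialPair.generatedByAtMost_of_sqrt [IsAlgClosed k] [NeZero (2 : k)]
    (hfg : IsSpecialPair f g) {α : RationalFunctionField k n} (hα0 : α ≠ 0)
    (hα : α = algebraMap _ (RationalFunctionField k n) f / algebraMap _ _ g)
    {L : Type*} [Field L] [Algebra k L] [Algebra (RationalFunctionField k n) L]
    [IsScalarTower k (RationalFunctionField k n) L] {ζ : L} (hζ : ζ ^ 2 = algebraMap _ L α)
    (hζ_top : adjoin (RationalFunctionField k n) {ζ} = ⊤) : GeneratedByAtMost k L n := by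
  have hg : algebraMap _ (RationalFunctionField k n) g ≠ 0 := fun h ↦
    hα0 (by rw [hα, h, div_zero])
  let x (i : Fin n) : L := algebraMap _ L
    (algebraMap (MvPolynomial (Fin n) k) (RationalFunctionField k n) (X i))
  have haeval (p : MvPolynomial (Fin n) k) : aeval x p =
        algebraMap _ L (algebraMap _ (RationalFunctionField k n) p) := by
    refine (aeval_algebraMap_apply L
      (algebraMap (MvPolynomial (Fin n) k) (RationalFunctionField k n) ∘ X) p).trans ?_
    rw [aeval_algebraMap_apply, aeval_X_left_apply]
  refine hfg.generatedByAtMost (x := x) (ζ := ζ) ?_ ?_ ?_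
  · rw [Set.range_comp']
    exact adjoin_image_union_eq_top (adjoin_X_eq_top n) hζ_top
  · rwa [haeval, map_ne_zero]
  · rw [haeval, haeval, hζ, ← map_mul, hα, div_mul_cancel₀ _ hg]

lemma IsSpecialPair.generatedByAtMost_of_quadric_of_sqrt [IsAlgClosed k] [NeZero (2 : k)]
    (hfg : IsSpecialPair f g) (ha : a i₀ ≠ 0)
    (hai₀ : a i₀ = algebraMap _ (RationalFunctionField k n) f / algebraMap _ _ g)
    {N : Type*} [Field N] [Algebra k N] [Algebra (RationalFunctionField k n) N]
    [IsScalarTower k (RationalFunctionField k n) N] {z : Fin r → N}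
    (hz : aeval z (quadricPolynomial a) = 0) {ζ : N} (hζ : ζ ^ 2 = algebraMap _ N (a i₀))
    (h_top : adjoin (RationalFunctionField k n) (Set.range z ∪ {ζ}) = ⊤) :
    GeneratedByAtMost k N (n + r - 1) := by
  let L := adjoin (RationalFunctionField k n) {ζ}
  have : NeZero (2 : L) := ⟨two_ne_zero_of_algebra k L⟩
  have : IsScalarTower k L N := .to₁₃₄ k (RationalFunctionField k n) L N
  have hgen : AdjoinSimple.gen _ ζ ^ 2 = algebraMap _ L (a i₀) := Subtype.ext hζ
  have hL : GeneratedByAtMost k L n :=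
    hfg.generatedByAtMost_of_sqrt ha hai₀ hgen (adjoin_gen_eq_top _ ζ)
  obtain ⟨ι, hι⟩ : ∃ ι : k, ι ^ 2 = -1 := IsAlgClosed.exists_pow_nat_eq (-1) two_pos
  have hc : 1 + algebraMap _ L (a i₀) * (algebraMap k L ι / AdjoinSimple.gen _ ζ) ^ 2 = 0 := by
    rw [div_pow, ← map_pow, hι, hgen, mul_div_cancel₀ _ ((map_ne_zero _).mpr ha), map_neg, map_one,
      add_neg_cancel]
  have hzL : aeval z (quadricPolynomial (algebraMap _ L ∘ a)) = 0 := by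
    rw [← hz]
    simp only [map_add, map_one, map_sum, map_mul, map_pow, aeval_C, aeval_X, Function.comp_apply,
      ← IsScalarTower.algebraMap_apply _ L N]
  have hz_top : adjoin L (Set.range z) = ⊤ := by
    rw [← restrictScalars_eq_top_iff (K := RationalFunctionField k n), adjoin_adjoin_left,
      Set.union_comm, h_top]
  obtain ⟨d, rfl, hd⟩ := exists_generatedByAtMost_of_quadric hc hzL hz_top
  exact hL.trans hd

lemma IsSpecialPair.exists_adjoinRoot_algEquiv [IsAlgClosed k] [NeZero (2 : k)]
    (hfg : IsSpecialPair f g) (hn : 0 < n) (ha : a i₀ ≠ 0)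
    (hai₀ : a i₀ = algebraMap _ (RationalFunctionField k n) f / algebraMap _ _ g)
    {F : Type u} [Field F] [Algebra k F] [Algebra (RationalFunctionField k n) F]
    [IsScalarTower k (RationalFunctionField k n) F] {z : Fin r → F}
    (hz : aeval z (quadricPolynomial a) = 0)
    (hz_top : adjoin (RationalFunctionField k n) (Set.range z) = ⊤)
    (hd : ((n + r - 1 : ℕ) : Cardinal) ≤ Algebra.trdeg k F) :
    ∃ α : F, Nonempty (AdjoinRoot (Polynomial.X ^ 2 - Polynomial.C α) ≃ₐ[k]
      RationalFunctionField k (n + r - 1)) := by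
  by_cases hsq : IsSquare (algebraMap _ F (a i₀))
  · obtain ⟨ζ, hζ⟩ := hsq
    refine GeneratedByAtMost.exists_adjoinRoot_algEquiv
      (hfg.generatedByAtMost_of_quadric_of_sqrt ha hai₀ hz ((sq ζ).trans hζ.symm) ?_) hd ?_
    · rw [eq_top_iff, ← hz_top]
      exact adjoin.mono _ _ _ Set.subset_union_left
    · have := i₀.pos
      omega
  · refine ⟨_, nonempty_adjoinRoot_algEquiv hsq hd fun N _ _ _ _ ζ hζ hζ_top ↦ ?_⟩
    let _ : Algebra (RationalFunctionField k n) N :=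
      ((algebraMap F N).comp (algebraMap (RationalFunctionField k n) F)).toAlgebra
    have : IsScalarTower (RationalFunctionField k n) F N := .of_algebraMap_eq fun _ ↦ rfl
    have : IsScalarTower k (RationalFunctionField k n) N := .to₁₂₄ k _ F N
    refine hfg.generatedByAtMost_of_quadric_of_sqrt ha hai₀ (z := algebraMap F N ∘ z) ?_ hζ ?_
    · rw [aeval_algebraMap_apply, hz, map_zero]
    · rw [Set.range_comp]
      exact adjoin_image_union_eq_top hz_top hζ_top

section FunctionField

variable {K : Type*} [Field K] (a : Fin r → K) (F : Type*) [Field F] [Algebra K F]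
  [Algebra (QuadricRing a) F] [IsScalarTower K (QuadricRing a) F]

lemma aeval_mk_X_quadricPolynomial :
    aeval (algebraMap (QuadricRing a) F ∘ fun i ↦ Ideal.Quotient.mk _ (X i))
      (quadricPolynomial a) = 0 := by
  rw [aeval_algebraMap_apply]
  have h := aeval_mk_X_eq_mk_rename (Ideal.span {quadricPolynomial a}) id (quadricPolynomial a)
  rw [rename_id_apply, Ideal.Quotient.eq_zero_iff_mem.mpr (Ideal.mem_span_singleton_self _)] at h
  exact (congrArg (algebraMap (QuadricRing a) F) h).trans (map_zero _)

lemma adjoin_mk_X_eq_top [IsFractionRing (QuadricRing a) F] : adjoin K (Set.range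
    (algebraMap (QuadricRing a) F ∘ fun i ↦ Ideal.Quotient.mk _ (X i))) = ⊤ := by
  rw [Set.range_comp]
  refine adjoin_algebraMap_image_eq_top F ?_
  rw [Set.range_comp', ← Ideal.Quotient.mkₐ_eq_mk K, ← AlgHom.map_adjoin,
    MvPolynomial.adjoin_range_X, Algebra.map_top, AlgHom.range_eq_top]
  exact Ideal.Quotient.mkₐ_surjective _ _

end FunctionField

theorem quadric_with_special_first_coefficient_unirational_general [IsAlgClosed k]
    [NeZero (2 : k)] (hn : 0 < n) (ha : a i₀ ≠ 0) (hfg : IsSpecialPair f g)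
    (hai₀ : a i₀ = algebraMap _ (RationalFunctionField k n) f / algebraMap _ _ g)
    [IsDomain (QuadricRing a)] :
    (∃ d : ℕ, Nonempty (FractionRing (QuadricRing a) →ₐ[k] RationalFunctionField k d)) ∧
      ∃ α : FractionRing (QuadricRing a), Nonempty (AdjoinRoot (Polynomial.X ^ 2 - Polynomial.C α)
        ≃ₐ[k] RationalFunctionField k (n + r - 1)) := by
  have hα := hfg.exists_adjoinRoot_algEquiv hn ha hai₀
    (aeval_mk_X_quadricPolynomial a (FractionRing (QuadricRing a)))
    (adjoin_mk_X_eq_top a _) (le_trdeg_quadric ha)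
  refine ⟨?_, hα⟩
  obtain ⟨α, ⟨e⟩⟩ := hα
  exact ⟨_, ⟨e.toAlgHom.comp (IsScalarTower.toAlgHom k _ _)⟩⟩

end Quadric

lemma tail_single_zero {n : ℕ} (m : ℕ) :
    (Finsupp.single (0 : Fin (n + 1)) m).tail = 0 := by
  ext i
  rw [Finsupp.tail_apply, Finsupp.single_eq_of_ne i.succ_ne_zero, Finsupp.zero_apply]

lemma tail_single_succ {n : ℕ} (i : Fin n) (m : ℕ) :
    (Finsupp.single i.succ m).tail = Finsupp.single i m := by
  ext j
  simp only [Finsupp.tail_apply, Finsupp.single_apply, Fin.succ_inj]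

lemma homogMat_eq_quadraticFormMatrix {n : ℕ} (f : MvPolynomial (Fin n) ℂ) :
    homogMat f = quadraticFormMatrix f := by
  have htail (s t : Fin (n + 1) →₀ ℕ) : (s + t).tail = s.tail + t.tail := by ext; rfl
  ext i j
  rw [homogMat, quadraticFormMatrix, Matrix.of_apply, Matrix.of_apply, htail]
  rcases i.eq_zero_or_eq_succ with rfl | ⟨i, rfl⟩ <;>
    rcases j.eq_zero_or_eq_succ with rfl | ⟨j, rfl⟩
  · simp [tail_single_zero]
  · simp [tail_single_zero, tail_single_succ, (Fin.succ_ne_zero _).symm]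
  · simp [tail_single_zero, tail_single_succ]
  · rcases eq_or_ne i j with rfl | hij
    · simp [tail_single_succ, ← Finsupp.single_add]
    · simp [tail_single_succ, hij]

/-- **Lemma 3.2 (Schreieder, after Colliot-Thélène–Ojanguren).**
Let `n ≥ 2`, let `K = ℂ(x₁,…,xₙ)` be the function field of `ℙⁿ` and let
`q = ⟨1, a₁, …, a_r⟩` be a quadratic form over `K` with all `a_i ∈ K^*`, defining an
integral projective quadric hypersurface `Q ⊂ ℙ^r_K`.  Suppose `a₁ = f/g` with
`f, g ∈ ℂ[x₁,…,xₙ]` satisfying one of: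
(1) `f` and `g` are linear; or
(2) `f` and `g` have degree at most two, and the homogenization of `g z² - f` over
`L = ℂ(z)` is a quadratic form of rank `≥ 3` over `L`.
Then `Q` is unirational over `ℂ`; more precisely, some degree two extension of the
function field `K(Q)` is purely transcendental over `ℂ`. -/
theorem quadric_with_special_first_coefficient_unirational
    (n r : ℕ) (hn : 2 ≤ n) (hr : 0 < r)
    (a : Fin r → RatFF n) (ha : ∀ i, a i ≠ 0)
    (f g : MvPolynomial (Fin n) ℂ) (hg : g ≠ 0)
    (hfg : a ⟨0, hr⟩ =
      algebraMap (MvPolynomial (Fin n) ℂ) (RatFF n) f /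
        algebraMap (MvPolynomial (Fin n) ℂ) (RatFF n) g)
    (hcase :
      (f.totalDegree ≤ 1 ∧ g.totalDegree ≤ 1) ∨
      (f.totalDegree ≤ 2 ∧ g.totalDegree ≤ 2 ∧
        3 ≤ Matrix.rank (Matrix.of fun i j =>
          (RatFunc.X : RatFunc ℂ) ^ 2 * algebraMap ℂ (RatFunc ℂ) (homogMat g i j) -
            algebraMap ℂ (RatFunc ℂ) (homogMat f i j))))
    (hQ : IsDomain (quadricChartRing n r a)) :
    (∃ d : ℕ, Nonempty (FractionRing (quadricChartRing n r a) →ₐ[ℂ] RatFF d)) ∧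
      ∃ α : FractionRing (quadricChartRing n r a),
        Nonempty (AdjoinRoot (Polynomial.X ^ 2 - Polynomial.C α) ≃ₐ[ℂ] RatFF (n + r - 1)) := by
  have : IsDomain (QuadricRing a) := hQ
  have hspecial : IsSpecialPair f g := by
    simpa only [IsSpecialPair, pencilMatrix, homogMat_eq_quadraticFormMatrix] using hcase
  exact quadric_with_special_first_coefficient_unirational_general (by omega) (ha _) hspecial hfg
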